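/- arXiv:2309.05082 — 3 statements merged into one kernel-verified Lean document; each statement's English description precedes it below -/
import Mathlib

section
/- Let E ⊆ ℕ^m and fix a partition of {1,…,m} into p blocks. Then there exists a numerical polynomial ω_E(t₁,…,t_p) such that: (i) ω_E(r₁,…,r_p) = Card V_E(r₁,…,r_p) for all sufficiently large (r₁,…,r_p) ∈ ℕ^p; (ii) the total degree of ω_E does not exceed m and deg_{t_i} ω_E ≤ m_i for 1 ≤ i ≤ p; (iii) deg ω_E = m if and only if E = ∅, in which case ω_E(t₁,…,t_p) = ∏_{i=1}^{p} C(t_i+m_i, m_i). -/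
/-- The univariate polynomial `t ↦ C(t + c, j)`. -/
noncomputable def binomShift (c : ℤ) (j : ℕ) : Polynomial ℚ :=
  ((j.factorial : ℚ)⁻¹) • ((descPochhammer ℚ j).comp (Polynomial.X + Polynomial.C (c : ℚ)))

/-- `C(t_k + j, j)` viewed as a multivariate polynomial in the variable `t_k`. -/
noncomputable def binomVar {p : ℕ} (k : Fin p) (j : ℕ) : MvPolynomial (Fin p) ℚ :=
  Polynomial.aeval (MvPolynomial.X k) (binomShift j j)

/-- A numerical polynomial in `p` variables. -/
def IsNumerical {p : ℕ} (f : MvPolynomial (Fin p) ℚ) : Prop :=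
  ∃ s : Fin p → ℕ, ∀ r : Fin p → ℕ, (∀ i, s i ≤ r i) →
    ∃ z : ℤ, MvPolynomial.eval (fun i => (r i : ℚ)) f = (z : ℚ)

/-- Size `m_k` of the `k`-th block of the partition `π` of `{1,…,m}`. -/
def blockCard {m p : ℕ} (π : Fin m → Fin p) (k : Fin p) : ℕ :=
  (Finset.univ.filter fun i => π i = k).card

/-- The order of `a ∈ ℕ^m` with respect to the `k`-th block of the partition `π`. -/
def ordBlockN {m p : ℕ} (π : Fin m → Fin p) (k : Fin p) (a : Fin m → ℕ) : ℕ :=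
  ∑ i ∈ Finset.univ.filter (fun i => π i = k), a i

/-- `V_E = {v ∈ ℕ^m : no e ∈ E satisfies e ≤ v componentwise}`. -/
def VSet {m : ℕ} (E : Set (Fin m → ℕ)) : Set (Fin m → ℕ) :=
  {v | ∀ e ∈ E, ¬ e ≤ v}

/-- `V_E(r₁,…,r_p) = {v ∈ V_E : ord_k v ≤ r_k for all k}`. -/
def VSetBd {m p : ℕ} (π : Fin m → Fin p) (E : Set (Fin m → ℕ)) (r : Fin p → ℕ) :
    Set (Fin m → ℕ) :=
  {v ∈ VSet E | ∀ k, ordBlockN π k v ≤ r k}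

theorem aux_card_simplex (ι : Type) [Fintype ι] [DecidableEq ι] (n : ℕ) :
    Nat.card {f : ι → ℕ // ∑ i, f i ≤ n} = (n + Fintype.card ι).choose (Fintype.card ι) := by
  let e : {f : ι → ℕ // ∑ i, f i ≤ n} ≃ {P : Option ι →₀ ℕ // (P.sum fun _ => id) = n} :=
    { toFun := fun f => ⟨Finsupp.equivFunOnFinite.symm fun o => o.elim (n - ∑ i, f.1 i) f.1, by
        have := f.2
        rw [Finsupp.sum_fintype _ _ (fun _ => rfl), Fintype.sum_option]
        simp; omega⟩
      invFun := fun g => ⟨fun i => g.1 (some i), by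
        have := g.2
        rw [Finsupp.sum_fintype _ _ (fun _ => rfl), Fintype.sum_option] at this
        simp only [id] at this
        dsimp only
        omega⟩
      left_inv := fun f => by ext; simp
      right_inv := fun g => by
        ext o
        have := g.2
        rw [Finsupp.sum_fintype _ _ (fun _ => rfl), Fintype.sum_option] at this
        cases o
        · simp only [id] at this
          simp; omega
        · simp }
  rw [Nat.card_congr (e.trans (Sym.equivNatSum (Option ι) n).symm), Nat.card_eq_fintype_card,
    Sym.card_sym_eq_choose, Fintype.card_option]
  have h : Fintype.card ι + 1 + n - 1 = n + Fintype.card ι := by omega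
  rw [h, ← Nat.choose_symm_add]

def auxBox {m p : ℕ} (π : Fin m → Fin p) (r : Fin p → ℕ) : Set (Fin m → ℕ) :=
  {v | ∀ k, ordBlockN π k v ≤ r k}

theorem aux_le_ord {m p : ℕ} (π : Fin m → Fin p) (v : Fin m → ℕ) (i : Fin m) :
    v i ≤ ordBlockN π (π i) v := by
  unfold ordBlockN
  exact Finset.single_le_sum (f := v) (fun _ _ => Nat.zero_le _) (by simp)

theorem auxBox_finite {m p : ℕ} (π : Fin m → Fin p) (r : Fin p → ℕ) : (auxBox π r).Finite := by
  apply (Set.finite_Iic (fun i => r (π i))).subset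
  intro v hv i
  exact (aux_le_ord π v i).trans (hv _)

theorem ordBlockN_subtype {m p : ℕ} (π : Fin m → Fin p) (k : Fin p) (v : Fin m → ℕ) :
    ordBlockN π k v = ∑ i : {i // π i = k}, v i := by
  unfold ordBlockN
  rw [Finset.sum_subtype]
  simp

theorem auxBox_ncard {m p : ℕ} (π : Fin m → Fin p) (r : Fin p → ℕ) :
    (auxBox π r).ncard = ∏ k, (r k + blockCard π k).choose (blockCard π k) := by
  let e : auxBox π r ≃ ∀ k, {f : {i // π i = k} → ℕ // ∑ i, f i ≤ r k} :=
    { toFun := fun v k => ⟨fun i => v.1 i, by rw [← ordBlockN_subtype]; exact v.2 k⟩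
      invFun := fun g => ⟨fun i => (g (π i)).1 ⟨i, rfl⟩, fun k => by
        rw [ordBlockN_subtype]
        refine le_trans (le_of_eq ?_) (g k).2
        refine Finset.sum_congr rfl ?_
        rintro ⟨i, rfl⟩ _
        rfl⟩
      left_inv := fun v => by ext; rfl
      right_inv := fun g => by
        ext k ⟨i, rfl⟩
        rfl }
  rw [← Nat.card_coe_set_eq, Nat.card_congr e, Nat.card_pi]
  refine Finset.prod_congr rfl fun k _ => ?_
  rw [aux_card_simplex, Fintype.card_subtype]
  rfl

theorem ordBlockN_add {m p : ℕ} (π : Fin m → Fin p) (k : Fin p) (v w : Fin m → ℕ) :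
    ordBlockN π k (v + w) = ordBlockN π k v + ordBlockN π k w := by
  simp [ordBlockN, Finset.sum_add_distrib]

theorem auxBox_shift {m p : ℕ} (π : Fin m → Fin p) (r : Fin p → ℕ) (c : Fin m → ℕ)
    (h : ∀ k, ordBlockN π k c ≤ r k) :
    {v ∈ auxBox π r | c ≤ v}.ncard =
      ∏ k, (r k - ordBlockN π k c + blockCard π k).choose (blockCard π k) := by
  rw [← auxBox_ncard π (fun k => r k - ordBlockN π k c)]
  rw [← Set.ncard_image_of_injective (auxBox π fun k => r k - ordBlockN π k c)
    (add_left_injective c)]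
  congr 1
  ext v
  constructor
  · rintro ⟨hv, hc⟩
    have hvc : v - c + c = v := by
      ext i
      have h0 : c i ≤ v i := hc i
      simp only [Pi.add_apply, Pi.sub_apply]
      omega
    refine ⟨v - c, fun k => ?_, hvc⟩
    have h1 := hv k
    rw [← hvc, ordBlockN_add] at h1
    show ordBlockN π k (v - c) ≤ r k - ordBlockN π k c
    omega
  · rintro ⟨w, hw, rfl⟩
    refine ⟨fun k => ?_, fun i => ?_⟩
    · have h1 : ordBlockN π k w ≤ r k - ordBlockN π k c := hw k
      have h2 := h k
      simp only [ordBlockN_add]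
      omega
    · simp

theorem aux_coeff_prod {p : ℕ} (q : Fin p → Polynomial ℚ) (s : Fin p →₀ ℕ) :
    MvPolynomial.coeff s (∏ k, Polynomial.aeval (MvPolynomial.X k : MvPolynomial (Fin p) ℚ) (q k))
      = ∏ k, (q k).coeff (s k) := by
  classical
  have h1 : ∀ k, Polynomial.aeval (MvPolynomial.X k : MvPolynomial (Fin p) ℚ) (q k) =
      ∑ j ∈ Finset.range (max ((q k).natDegree + 1) (s k + 1)),
        MvPolynomial.C ((q k).coeff j) * MvPolynomial.X k ^ j := by
    intro k
    conv_lhs => rw [(q k).as_sum_range' (max ((q k).natDegree + 1) (s k + 1)) (by simp)]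
    simp [Polynomial.aeval_monomial, MvPolynomial.algebraMap_eq]
  have h2 : ∀ f : Fin p → ℕ, ∏ k, (MvPolynomial.C ((q k).coeff (f k)) * MvPolynomial.X k ^ (f k)
      : MvPolynomial (Fin p) ℚ) =
      MvPolynomial.monomial (Finsupp.equivFunOnFinite.symm f) (∏ k, (q k).coeff (f k)) := by
    intro f
    rw [Finset.prod_mul_distrib, MvPolynomial.monomial_eq, map_prod, Finsupp.prod_fintype]
    · simp
    · simp
  simp only [h1]
  rw [Finset.prod_univ_sum, MvPolynomial.coeff_sum]
  rw [Finset.sum_eq_single (s : Fin p → ℕ)]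
  · rw [h2]; simp
  · intro f _ hf
    rw [h2, MvPolynomial.coeff_monomial, if_neg]
    rintro rfl
    exact hf (by simp)
  · intro h
    exfalso
    apply h
    simp

theorem binomShift_natDegree (c : ℤ) (j : ℕ) : (binomShift c j).natDegree ≤ j := by
  unfold binomShift
  refine (Polynomial.natDegree_smul_le _ _).trans ?_
  rw [Polynomial.natDegree_comp, Polynomial.natDegree_X_add_C, descPochhammer_natDegree]
  simp

theorem binomShift_coeff (c : ℤ) (j : ℕ) : (binomShift c j).coeff j = (j.factorial : ℚ)⁻¹ := by
  have h : ((descPochhammer ℚ j).comp (Polynomial.X + Polynomial.C (c : ℚ))).Monic :=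
    (monic_descPochhammer ℚ j).comp_X_add_C _
  have h2 : ((descPochhammer ℚ j).comp (Polynomial.X + Polynomial.C (c : ℚ))).natDegree = j := by
    rw [Polynomial.natDegree_comp, Polynomial.natDegree_X_add_C, descPochhammer_natDegree, mul_one]
  have h3 := h.coeff_natDegree
  rw [h2] at h3
  rw [binomShift, Polynomial.coeff_smul, h3, smul_eq_mul, mul_one]

theorem binomShift_eval (c : ℤ) (j : ℕ) (r n : ℕ) (h : (r : ℤ) + c = n) :
    (binomShift c j).eval (r : ℚ) = (n.choose j : ℚ) := by
  have h' : (r : ℚ) + (c : ℚ) = (n : ℚ) := by exact_mod_cast h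
  have hj : (j.factorial : ℚ) ≠ 0 := by exact_mod_cast j.factorial_ne_zero
  simp only [binomShift, Polynomial.eval_smul, Polynomial.eval_comp, Polynomial.eval_add,
    Polynomial.eval_X, Polynomial.eval_C, h', descPochhammer_eval_eq_descFactorial,
    Nat.descFactorial_eq_factorial_mul_choose]
  push_cast
  rw [smul_eq_mul, inv_mul_cancel_left₀ hj]

noncomputable def auxTerm {m p : ℕ} (π : Fin m → Fin p) (c : Fin m → ℕ) : MvPolynomial (Fin p) ℚ :=
  ∏ k, Polynomial.aeval (MvPolynomial.X k)
    (binomShift ((blockCard π k : ℤ) - ordBlockN π k c) (blockCard π k))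

theorem auxTerm_eval {m p : ℕ} (π : Fin m → Fin p) (r : Fin p → ℕ) (c : Fin m → ℕ)
    (h : ∀ k, ordBlockN π k c ≤ r k) :
    MvPolynomial.eval (fun i => (r i : ℚ)) (auxTerm π c) = ({v ∈ auxBox π r | c ≤ v}.ncard : ℚ) := by
  rw [auxBox_shift π r c h, auxTerm, map_prod]
  push_cast
  refine Finset.prod_congr rfl fun k _ => ?_
  rw [← binomShift_eval ((blockCard π k : ℤ) - ordBlockN π k c) _ (r k) _
    (by have := h k; push_cast [this]; ring)]
  rw [← MvPolynomial.coe_aeval_eq_eval, RingHom.coe_coe, ← Polynomial.aeval_algHom_apply]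
  simp [Polynomial.aeval_def, Polynomial.eval₂_eq_eval_map]

theorem aux_finite_basis {m : ℕ} (E : Set (Fin m → ℕ)) :
    ∃ F : Finset (Fin m → ℕ), VSet E = VSet (F : Set (Fin m → ℕ)) ∧ (F = ∅ ↔ E = ∅) := by
  have hfin : {x | Minimal (· ∈ E) x}.Finite :=
    WellQuasiOrderedLE.finite_of_isAntichain (setOfPred_minimal_antichain _)
  refine ⟨hfin.toFinset, ?_, ?_⟩
  · ext v
    constructor
    · intro h e he
      simp at he
      exact h e he.prop
    · intro h e he hev
      obtain ⟨b, hb, hmin⟩ := exists_minimal_le_of_wellFoundedLT (· ∈ E) e he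
      exact h b (by simpa using hmin) (hb.trans hev)
  · constructor
    · intro h
      by_contra hne
      obtain ⟨e, he⟩ := Set.nonempty_iff_ne_empty.mpr hne
      obtain ⟨b, hb, hmin⟩ := exists_minimal_le_of_wellFoundedLT (· ∈ E) e he
      have : b ∈ hfin.toFinset := by simpa using hmin
      rw [h] at this
      simp at this
    · rintro rfl
      ext x
      simp [Minimal]

theorem aux_incl_excl {m p : ℕ} (π : Fin m → Fin p) (F : Finset (Fin m → ℕ)) (r : Fin p → ℕ) :
    ((VSetBd π (F : Set (Fin m → ℕ)) r).ncard : ℚ) =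
      ∑ S ∈ F.powerset, (-1 : ℚ) ^ S.card * ({v ∈ auxBox π r | S.sup id ≤ v}.ncard : ℚ) := by
  classical
  set B := (auxBox_finite π r).toFinset with hB
  have hcount : ∀ P : (Fin m → ℕ) → Prop,
      ({v ∈ auxBox π r | P v}.ncard : ℚ) = ∑ v ∈ B, if P v then (1 : ℚ) else 0 := by
    intro P
    have : {v ∈ auxBox π r | P v} = ((B.filter P : Finset _) : Set (Fin m → ℕ)) := by
      ext v; simp [hB]
    rw [this, Set.ncard_coe_finset, Finset.sum_boole]
  have h1 : VSetBd π (F : Set (Fin m → ℕ)) r = {v ∈ auxBox π r | ∀ e ∈ F, ¬ e ≤ v} := by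
    ext v
    simp [VSetBd, VSet, auxBox, and_comm]
  rw [h1, hcount]
  simp only [hcount, Finset.mul_sum]
  rw [Finset.sum_comm]
  refine Finset.sum_congr rfl fun v _ => ?_
  have h2 : (if ∀ e ∈ F, ¬ e ≤ v then (1 : ℚ) else 0) =
      ∏ e ∈ F, (-(if e ≤ v then (1 : ℚ) else 0) + 1) := by
    split_ifs with h
    · rw [Finset.prod_eq_one]
      intro e he
      simp [h e he]
    · push Not at h
      obtain ⟨e, he, hev⟩ := h
      rw [Finset.prod_eq_zero he]
      simp [hev]
  refine Eq.trans (Eq.trans (by congr) h2) ?_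
  rw [Finset.prod_add]
  refine Finset.sum_congr rfl fun S _ => ?_
  rw [Finset.prod_const_one, mul_one, Finset.prod_neg]
  congr 1
  split_ifs with h
  · rw [Finset.prod_eq_one]
    intro e he
    rw [if_pos]
    exact (Finset.le_sup (f := id) he).trans h
  · rw [Finset.sup_le_iff] at h
    push Not at h
    obtain ⟨e, he, hev⟩ := h
    rw [Finset.prod_eq_zero he]
    exact if_neg hev

theorem aux_sum_blockCard {m p : ℕ} (π : Fin m → Fin p) : ∑ k, blockCard π k = m := by
  unfold blockCard
  have := Finset.card_eq_sum_card_fiberwise (f := π) (s := Finset.univ) (t := Finset.univ)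
    (by simp)
  simpa using this.symm

/-- **Existence of the dimension polynomial of a subset of `ℕ^m`** (Kolchin-type theorem).
For `E ⊆ ℕ^m` and a partition of `{1,…,m}` into `p` blocks (encoded by the surjection
`π : Fin m → Fin p`, the block sizes being `blockCard π i`), there is a numerical polynomial
`ω_E` in `p` variables such that (i) `ω_E(r₁,…,r_p) = Card V_E(r₁,…,r_p)` for all sufficiently
large `(r₁,…,r_p)`; (ii) `deg ω_E ≤ m` and `deg_{t_i} ω_E ≤ m_i`; (iii) `deg ω_E = m` iff
`E = ∅`, in which case `ω_E = ∏_i C(t_i + m_i, m_i)`. -/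
theorem exists_dimension_polynomial_subset_nat {m p : ℕ} (hm : 0 < m) (hp : 0 < p)
    (π : Fin m → Fin p) (hπ : Function.Surjective π) (E : Set (Fin m → ℕ)) :
    ∃ ω : MvPolynomial (Fin p) ℚ, IsNumerical ω ∧
      (∃ s : Fin p → ℕ, ∀ r : Fin p → ℕ, (∀ i, s i ≤ r i) →
        MvPolynomial.eval (fun i => (r i : ℚ)) ω = ((VSetBd π E r).ncard : ℚ)) ∧
      ω.totalDegree ≤ m ∧ (∀ i, ω.degreeOf i ≤ blockCard π i) ∧
      (ω.totalDegree = m ↔ E = ∅) ∧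
      (E = ∅ → ω = ∏ i, binomVar i (blockCard π i)) := by
  classical
  obtain ⟨F, hVF, hFE⟩ := aux_finite_basis E
  let ω : MvPolynomial (Fin p) ℚ :=
    ∑ S ∈ F.powerset, MvPolynomial.C ((-1 : ℚ) ^ S.card) * auxTerm π (S.sup id)
  have hcoeff : ∀ s, MvPolynomial.coeff s ω = ∑ S ∈ F.powerset, (-1 : ℚ) ^ S.card *
      ∏ k, (binomShift ((blockCard π k : ℤ) - ordBlockN π k (S.sup id)) (blockCard π k)).coeff
        (s k) := by
    intro s
    simp only [ω, MvPolynomial.coeff_sum, MvPolynomial.coeff_C_mul, auxTerm, aux_coeff_prod]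
  have hsupp : ∀ s ∈ ω.support, ∀ k, s k ≤ blockCard π k := by
    intro s hs k
    by_contra hk
    push Not at hk
    rw [MvPolynomial.mem_support_iff, hcoeff] at hs
    apply hs
    refine Finset.sum_eq_zero fun S _ => ?_
    rw [Finset.prod_eq_zero (Finset.mem_univ k), mul_zero]
    exact Polynomial.coeff_eq_zero_of_natDegree_lt ((binomShift_natDegree _ _).trans_lt hk)
  have hsum := aux_sum_blockCard π
  have htd : ω.totalDegree ≤ m := by
    rw [MvPolynomial.totalDegree]
    refine Finset.sup_le fun s hs => ?_
    rw [Finsupp.sum_fintype _ _ (fun _ => rfl)]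
    conv_rhs => rw [← hsum]
    exact Finset.sum_le_sum fun k _ => hsupp s hs k
  let M : Fin p →₀ ℕ := Finsupp.equivFunOnFinite.symm (blockCard π)
  have hM : MvPolynomial.coeff M ω = (∑ S ∈ F.powerset, (-1 : ℚ) ^ S.card) *
      ∏ k, ((blockCard π k).factorial : ℚ)⁻¹ := by
    rw [hcoeff, Finset.sum_mul]
    refine Finset.sum_congr rfl fun S _ => ?_
    congr 1
    refine Finset.prod_congr rfl fun k _ => ?_
    simp [M, binomShift_coeff]
  have heval : ∃ s : Fin p → ℕ, ∀ r : Fin p → ℕ, (∀ i, s i ≤ r i) →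
        MvPolynomial.eval (fun i => (r i : ℚ)) ω = ((VSetBd π E r).ncard : ℚ) := by
    refine ⟨fun k => ∑ S ∈ F.powerset, ordBlockN π k (S.sup id), fun r hr => ?_⟩
    have h1 : VSetBd π E r = VSetBd π (F : Set (Fin m → ℕ)) r := by
      simp only [VSetBd, hVF]
    rw [h1, aux_incl_excl]
    simp only [ω, map_sum, map_mul, MvPolynomial.eval_C]
    refine Finset.sum_congr rfl fun S hS => ?_
    rw [auxTerm_eval]
    intro k
    exact (Finset.single_le_sum (f := fun S : Finset (Fin m → ℕ) => ordBlockN π k (S.sup id))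
      (fun _ _ => Nat.zero_le _) hS).trans (hr k)
  refine ⟨ω, ?_, heval, htd, ?_, ?_, ?_⟩
  · obtain ⟨s, hs⟩ := heval
    exact ⟨s, fun r hr => ⟨(VSetBd π E r).ncard, by rw [hs r hr]; simp⟩⟩
  · intro k
    rw [MvPolynomial.degreeOf_le_iff]
    exact fun s hs => hsupp s hs k
  · constructor
    · intro hdeg
      by_contra hne
      have hFne : F.Nonempty := by
        rw [Finset.nonempty_iff_ne_empty]
        exact fun h => hne (hFE.mp h)
      have hz : (∑ S ∈ F.powerset, (-1 : ℚ) ^ S.card) = 0 := by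
        have := Finset.sum_powerset_neg_one_pow_card_of_nonempty hFne
        exact_mod_cast this
      rw [hz, zero_mul] at hM
      have hlt : ω.totalDegree < m := by
        rw [MvPolynomial.totalDegree, Finset.sup_lt_iff hm]
        intro s hs
        rw [Finsupp.sum_fintype _ _ (fun _ => rfl)]
        conv_rhs => rw [← hsum]
        refine Finset.sum_lt_sum (fun k _ => hsupp s hs k) ?_
        by_contra hcon
        push Not at hcon
        have : s = M := by
          ext k
          exact le_antisymm (hsupp s hs k) (by simpa [M] using hcon k (Finset.mem_univ k))
        rw [MvPolynomial.mem_support_iff, this] at hs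
        exact hs hM
      omega
    · intro h
      have hF := hFE.mpr h
      have hne : MvPolynomial.coeff M ω ≠ 0 := by
        rw [hM, hF]
        simp [Finset.prod_ne_zero_iff, Nat.factorial_ne_zero]
      refine le_antisymm htd ?_
      have := MvPolynomial.le_totalDegree (MvPolynomial.mem_support_iff.mpr hne)
      rw [Finsupp.sum_fintype _ _ (fun _ => rfl)] at this
      simpa [M, hsum] using this
  · intro h
    have hF := hFE.mpr h
    simp only [ω, hF, auxTerm, binomVar]
    simp [ordBlockN]
end

section
/- Let E = {e₁,…,e_q} (q ≥ 1) be a finite subset of ℕ^m with e_i = (e_{i1},…,e_{im}), and fix a partition of {1,…,m} into p blocks. For 0 ≤ l ≤ q let Θ(l,q) be the set of all l-element subsets of {1,…,q}; set ē_{∅ j} = 0 and, for ∅ ≠ θ ∈ Θ(l,q), ē_{θ j} = max{e_{ij} : i ∈ θ} (1 ≤ j ≤ m); let b_{θk} = Σ_{h∈Δ_k} ē_{θh} (k = 1,…,p). Then the dimension polynomial of E satisfies ω_E(t₁,…,t_p) = Σ_{l=0}^{q} (−1)^l Σ_{θ∈Θ(l,q)} ∏_{j=1}^{p} C(t_j +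 m_j − b_{θj}, m_j). -/
/-- `C(t_k + c, j)` viewed as a multivariate polynomial in the variable `t_k`. -/
noncomputable def binomVarShift {p : ℕ} (k : Fin p) (c : ℤ) (j : ℕ) :
    MvPolynomial (Fin p) ℚ :=
  Polynomial.aeval (MvPolynomial.X k) (binomShift c j)

/-- `ē_{θ h} = max{e_{ih} : i ∈ θ}` (with `ē_{∅ h} = 0`). -/
def thetaMax {m q : ℕ} (e : Fin q → Fin m → ℕ) (θ : Finset (Fin q)) (h : Fin m) : ℕ :=
  θ.sup (fun i => e i h)

/-- `b_{θ k} = Σ_{h ∈ Δ_k} ē_{θ h}`. -/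
def bTheta {m p q : ℕ} (π : Fin m → Fin p) (e : Fin q → Fin m → ℕ)
    (θ : Finset (Fin q)) (k : Fin p) : ℕ :=
  ∑ h ∈ Finset.univ.filter (fun h => π h = k), thetaMax e θ h

theorem ordBlockN_eq {m p : ℕ} (π : Fin m → Fin p) (k : Fin p) (a : Fin m → ℕ) :
    ordBlockN π k a = ∑ i : {i // π i = k}, a i := by
  unfold ordBlockN
  exact Finset.sum_subtype _ (by simp) _

theorem card_le_sum {ι : Type} [Fintype ι] (n : ℕ) :
    Nat.card {w : ι → ℕ // ∑ i, w i ≤ n} = (n + Fintype.card ι).choose (Fintype.card ι) := by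
  classical
  let f : {w : ι → ℕ // ∑ i, w i ≤ n} ≃ {w : Option ι → ℕ // ∑ i, w i = n} :=
    { toFun := fun w => ⟨fun o => o.elim (n - ∑ i, w.1 i) w.1, by
        have := w.2
        simp only [Fintype.sum_option, Option.elim]
        omega⟩
      invFun := fun w => ⟨fun i => w.1 (some i), by
        have := w.2
        simp only [Fintype.sum_option] at this
        show ∑ i, w.1 (some i) ≤ n
        omega⟩
      left_inv := fun w => rfl
      right_inv := fun w => by
        ext o
        have := w.2
        simp only [Fintype.sum_option] at this
        cases o with
        | none => simp only [Option.elim]; omega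
        | some i => rfl }
  rw [Nat.card_congr (f.trans (Sym.equivNatSumOfFintype (Option ι) n).symm),
    Nat.card_eq_fintype_card, Sym.card_sym_eq_choose, Fintype.card_option]
  have : Fintype.card ι + 1 + n - 1 = n + Fintype.card ι := by omega
  rw [this]
  exact Nat.choose_symm_add

theorem card_box {m p : ℕ} (π : Fin m → Fin p) (a : Fin m → ℕ) (r : Fin p → ℕ)
    (h : ∀ k, ordBlockN π k a ≤ r k) :
    Nat.card {v : Fin m → ℕ // a ≤ v ∧ ∀ k, ordBlockN π k v ≤ r k} =
      ∏ k, (r k - ordBlockN π k a + blockCard π k).choose (blockCard π k) := by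
  let f : {v : Fin m → ℕ // a ≤ v ∧ ∀ k, ordBlockN π k v ≤ r k} ≃
      ∀ k, {w : {i // π i = k} → ℕ // ∑ i, w i ≤ r k - ordBlockN π k a} :=
    { toFun := fun v k => ⟨fun i => v.1 i - a i, by
        have h1 := v.2.2 k
        rw [ordBlockN_eq] at h1 ⊢
        show ∑ i : {i // π i = k}, (v.1 i - a i) ≤ _
        rw [Finset.sum_tsub_distrib _ (fun (i : {i // π i = k}) _ => v.2.1 i.1)]
        omega⟩
      invFun := fun w => ⟨fun i => (w (π i)).1 ⟨i, rfl⟩ + a i, fun i => Nat.le_add_left _ _, by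
        intro k
        have h1 := (w k).2
        have h2 := h k
        have h3 := ordBlockN_eq π k a
        rw [ordBlockN_eq, Finset.sum_add_distrib]
        have : ∑ i : {i // π i = k}, (w (π i)).1 ⟨i, rfl⟩ = ∑ i, (w k).1 i := by
          apply Finset.sum_congr rfl
          rintro ⟨i, rfl⟩ _
          rfl
        omega⟩
      left_inv := fun v => by
        ext i
        exact Nat.sub_add_cancel (v.2.1 i)
      right_inv := fun w => by
        funext k
        ext ⟨i, hi⟩
        subst hi
        simp }
  rw [Nat.card_congr f, Nat.card_pi]
  refine Finset.prod_congr rfl fun k _ => ?_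
  rw [card_le_sum, Fintype.card_subtype]
  rfl

theorem eval_binom {p : ℕ} (r : Fin p → ℕ) (k : Fin p) (b n : ℕ) (h : b ≤ r k) :
    MvPolynomial.eval (fun i => (r i : ℚ)) (binomVarShift k ((n : ℤ) - (b : ℤ)) n) =
      ((r k - b + n).choose n : ℚ) := by
  unfold binomVarShift binomShift
  rw [← MvPolynomial.coe_aeval_eq_eval]
  rw [RingHom.coe_coe, ← Polynomial.aeval_algHom_apply]
  rw [MvPolynomial.aeval_X, Polynomial.coe_aeval_eq_eval, Polynomial.eval_smul,
    Polynomial.eval_comp]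
  have : Polynomial.eval (r k : ℚ) (Polynomial.X + Polynomial.C (((n : ℤ) - (b : ℤ) : ℤ) : ℚ))
      = ((r k - b + n : ℕ) : ℚ) := by
    simp [Nat.cast_sub h]; ring
  rw [this, descPochhammer_eval_eq_descFactorial, Nat.descFactorial_eq_factorial_mul_choose,
    smul_eq_mul, Nat.cast_mul, inv_mul_cancel_left₀]
  exact_mod_cast n.factorial_ne_zero

theorem box_finite {m p : ℕ} (π : Fin m → Fin p) (r : Fin p → ℕ) :
    {v : Fin m → ℕ | ∀ k, ordBlockN π k v ≤ r k}.Finite := by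
  apply (Set.finite_Iic (fun i => r (π i))).subset
  intro v hv i
  refine le_trans ?_ (hv (π i))
  unfold ordBlockN
  exact Finset.single_le_sum (f := v) (fun _ _ => Nat.zero_le _) (by simp)

theorem thetaMax_le_iff {m q : ℕ} (e : Fin q → Fin m → ℕ) (θ : Finset (Fin q)) (v : Fin m → ℕ) :
    thetaMax e θ ≤ v ↔ ∀ i ∈ θ, e i ≤ v := by
  simp only [Pi.le_def, thetaMax, Finset.sup_le_iff]
  tauto

/-- **Explicit formula for the dimension polynomial of a finite subset of `ℕ^m`.**
For `E = {e₁,…,e_q} ⊆ ℕ^m` (`q ≥ 1`) and a partition of `{1,…,m}` into `p` blocks,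
the polynomial `Σ_{l=0}^{q} (−1)^l Σ_{θ ∈ Θ(l,q)} ∏_{j=1}^{p} C(t_j + m_j − b_{θj}, m_j)`
is the dimension polynomial of `E`: it counts `V_E(r₁,…,r_p)` for all sufficiently large
`(r₁,…,r_p) ∈ ℕ^p`. -/
theorem dimension_polynomial_of_finite_subset_nat {m p q : ℕ} (hm : 0 < m) (hp : 0 < p)
    (hq : 1 ≤ q) (π : Fin m → Fin p) (hπ : Function.Surjective π)
    (e : Fin q → Fin m → ℕ) :
    ∃ s : Fin p → ℕ, ∀ r : Fin p → ℕ, (∀ i, s i ≤ r i) →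
      MvPolynomial.eval (fun i => (r i : ℚ))
        (∑ l ∈ Finset.range (q + 1), ((-1 : ℚ) ^ l) •
          ∑ θ ∈ Finset.powersetCard l (Finset.univ : Finset (Fin q)),
            ∏ j, binomVarShift j ((blockCard π j : ℤ) - (bTheta π e θ j : ℤ)) (blockCard π j))
        = ((VSetBd π (Set.range e) r).ncard : ℚ) := by
  classical
  refine ⟨fun k => bTheta π e Finset.univ k, fun r hr => ?_⟩
  have hb : ∀ θ k, bTheta π e θ k ≤ r k := fun θ k =>
    le_trans (Finset.sum_le_sum fun h _ => Finset.sup_mono (Finset.subset_univ θ)) (hr k)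
  set B := (box_finite π r).toFinset with hB
  have hmem : ∀ v, v ∈ B ↔ ∀ k, ordBlockN π k v ≤ r k := fun v => by simp [hB]
  have hR : ((VSetBd π (Set.range e) r).ncard : ℚ) =
      ∑ v ∈ B, ∏ i : Fin q, (1 - if e i ≤ v then (1 : ℚ) else 0) := by
    have h1 : VSetBd π (Set.range e) r = ↑(B.filter fun v => ∀ i, ¬ e i ≤ v) := by
      ext v
      simp only [VSetBd, VSet, Finset.coe_filter, hmem, Set.mem_ofPred_eq, Set.forall_mem_range]
      tauto
    rw [h1, Set.ncard_coe_finset, Finset.card_filter, Nat.cast_sum]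
    refine Finset.sum_congr rfl fun v _ => ?_
    split_ifs with h
    · rw [Finset.prod_eq_one]
      · simp
      · intro i _
        simp [h i]
    · push Not at h
      obtain ⟨i, hi⟩ := h
      rw [Finset.prod_eq_zero (Finset.mem_univ i)]
      · simp
      · simp [hi]
  have hT : ∀ θ : Finset (Fin q), MvPolynomial.eval (fun i => (r i : ℚ))
      (∏ j, binomVarShift j ((blockCard π j : ℤ) - (bTheta π e θ j : ℤ)) (blockCard π j)) =
      ∑ v ∈ B, if thetaMax e θ ≤ v then (1 : ℚ) else 0 := by
    intro θ
    rw [map_prod, Finset.sum_boole]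
    have h2 := card_box π (thetaMax e θ) r (hb θ)
    have h3 : Nat.card {v : Fin m → ℕ // thetaMax e θ ≤ v ∧ ∀ k, ordBlockN π k v ≤ r k} =
        (B.filter fun v => thetaMax e θ ≤ v).card := by
      rw [← Set.ncard_coe_finset, ← Nat.card_coe_set_eq]
      apply Nat.card_congr
      apply Equiv.subtypeEquivRight
      intro v
      simp only [Finset.coe_filter, hmem, Set.mem_ofPred_eq]
      tauto
    rw [← h3, h2, Nat.cast_prod]
    refine Finset.prod_congr rfl fun k _ => ?_
    rw [eval_binom r k _ _ (hb θ k)]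
    rfl
  have hI : ∀ v, ∏ i : Fin q, (1 - if e i ≤ v then (1 : ℚ) else 0) =
      ∑ θ ∈ (Finset.univ : Finset (Fin q)).powerset,
        (-1) ^ θ.card * if thetaMax e θ ≤ v then (1 : ℚ) else 0 := by
    intro v
    simp only [sub_eq_add_neg]
    rw [Finset.prod_one_add]
    refine Finset.sum_congr rfl fun θ _ => ?_
    rw [Finset.prod_neg, Finset.prod_boole]
    simp only [thetaMax_le_iff]
    congr
  rw [hR, Finset.sum_congr rfl (fun v _ => hI v), Finset.sum_comm, Finset.sum_powerset,
    Finset.card_univ, Fintype.card_fin, map_sum]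
  refine Finset.sum_congr rfl fun l _ => ?_
  rw [MvPolynomial.smul_eval, map_sum, Finset.mul_sum]
  refine Finset.sum_congr rfl fun θ hθ => ?_
  rw [hT, ← Finset.mul_sum, (Finset.mem_powersetCard.1 hθ).2]
end

section
/- Let K be an inversive difference field of characteristic zero with basic set σ = {α₁,…,α_m}, partitioned as σ = σ₁ ∪ … ∪ σ_p, and let f, g ∈ K{y₁,…,y_n}*. If rk f < rk g, then f is E-reduced with respect to g. -/
/-- Terms `γ y_j` of the ring of `σ*`-polynomials: pairs of an exponent vector and an index. -/
abbrev DTerm (m n : ℕ) := (Fin m → ℤ) × Fin n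

variable {K : Type*} [Field K] {m n p : ℕ}

/-- `ord_k γ`: sum of absolute values of the exponents of `γ` in the `k`-th block. -/
def ordBlk (π : Fin m → Fin p) (k : Fin p) (γ : Fin m → ℤ) : ℕ :=
  ∑ i ∈ Finset.univ.filter (fun i => π i = k), (γ i).natAbs

/-- `γ ∼ δ`: the exponent vectors lie in a common orthant of `ℤ^m`. -/
def similar {m : ℕ} (γ δ : Fin m → ℤ) : Prop := ∀ i, 0 ≤ γ i * δ i

/-- The `(2m+p)`-tuple used to define the order `<_k` on `Γ`. -/
def keyTuple (π : Fin m → Fin p) (k : Fin p) (γ : Fin m → ℤ) : List ℤ :=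
  [(ordBlk π k γ : ℤ)] ++
  (((List.finRange p).filter (fun j => j ≠ k)).map fun j => (ordBlk π j γ : ℤ)) ++
  (((List.finRange m).filter (fun i => π i = k)).map fun i => |γ i|) ++
  (((List.finRange m).filter (fun i => π i = k)).map fun i => γ i) ++
  (((List.finRange m).filter (fun i => π i ≠ k)).map fun i => |γ i|) ++
  (((List.finRange m).filter (fun i => π i ≠ k)).map fun i => γ i)

/-- Key of a term for the order `<_k` on terms (lexicographic: first the key of `γ`,
then the index of the indeterminate). -/
def termKey (π : Fin m → Fin p) (k : Fin p) (u : DTerm m n) : Lex (List ℤ × ℕ) :=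
  toLex (keyTuple π k u.1, (u.2 : ℕ))

/-- `f` lies in the base field `K` (is a constant `σ*`-polynomial). -/
def IsConst (f : MvPolynomial (DTerm m n) K) : Prop := f.vars = ∅

/-- The `k`-leader `u_f^{(k)}` of `f`: the `<_k`-greatest term appearing in `f`. -/
noncomputable def leader [NeZero n] (π : Fin m → Fin p) (k : Fin p)
    (f : MvPolynomial (DTerm m n) K) : DTerm m n :=
  if h : f.vars.Nonempty then (Finset.exists_max_image f.vars (termKey π k) h).choose
  else (0, default)

/-- The `k`-coleader `v_f^{(k)}` of `f`: the `<_k`-least term appearing in `f`. -/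
noncomputable def coleader [NeZero n] (π : Fin m → Fin p) (k : Fin p)
    (f : MvPolynomial (DTerm m n) K) : DTerm m n :=
  if h : f.vars.Nonempty then (Finset.exists_min_image f.vars (termKey π k) h).choose
  else (0, default)

/-- The action of `γ ∈ Γ` on a term. -/
def shiftTerm (γ : Fin m → ℤ) (u : DTerm m n) : DTerm m n := (γ + u.1, u.2)

/-- The automorphism `γ = α₁^{k₁} ⋯ α_m^{k_m}` of `K`. -/
noncomputable def gammaPowK (αK : Fin m → RingAut K)
    (hcK : ∀ i j, Commute (αK i) (αK j)) (γ : Fin m → ℤ) : RingAut K :=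
  Finset.univ.noncommProd (fun i => αK i ^ γ i)
    (fun i _ j _ _ => Commute.zpow_zpow (hcK i j) (γ i) (γ j))

/-- The action of `γ ∈ Γ` on the ring of `σ*`-polynomials: it acts on coefficients through
the automorphism `γ` of `K` and sends a term `γ' y_j` to `(γγ') y_j`. -/
noncomputable def gammaAct (αK : Fin m → RingAut K)
    (hcK : ∀ i j, Commute (αK i) (αK j)) (γ : Fin m → ℤ) :
    MvPolynomial (DTerm m n) K →+* MvPolynomial (DTerm m n) K :=
  (MvPolynomial.rename (shiftTerm γ)).toRingHom.comp
    (MvPolynomial.map (gammaPowK αK hcK γ : K →+* K))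

/-- `f` is `E`-reduced with respect to `g`: whenever `f` contains a power `(γ u_g^{(1)})^e`
with `γ ∼ u_g^{(1)}` and `e ≥ deg_{u_g^{(1)}} g`, either `ord_k u_{γg}^{(k)} > ord_k u_f^{(k)}`
for some `k ∈ {2,…,p}` or `ord_j v_{γg}^{(j)} < ord_j v_f^{(j)}` for some `j ∈ {1,…,p}`. -/
def EReduced [NeZero n] [NeZero p] (π : Fin m → Fin p) (αK : Fin m → RingAut K)
    (hcK : ∀ i j, Commute (αK i) (αK j)) (f g : MvPolynomial (DTerm m n) K) : Prop :=
  ∀ γ : Fin m → ℤ, similar γ (leader π 0 g).1 →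
    g.degreeOf (leader π 0 g) ≤ f.degreeOf (shiftTerm γ (leader π 0 g)) →
    ((∃ k : Fin p, k ≠ 0 ∧
        ordBlk π k (leader π k f).1 < ordBlk π k (leader π k (gammaAct αK hcK γ g)).1) ∨
     (∃ j : Fin p,
        ordBlk π j (coleader π j (gammaAct αK hcK γ g)).1 < ordBlk π j (coleader π j f).1))

/-- The components of the rank tuple of `f` after the `1`-leader:
`(deg_{u_f^{(1)}} f, ord₂ u_f^{(2)}, …, ord_p u_f^{(p)}, Eord₁ f, …, Eord_p f)`. -/
noncomputable def rankRest [NeZero n] [NeZero p] (π : Fin m → Fin p) (f : MvPolynomial (DTerm m n) K) :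
    List ℕ :=
  [f.degreeOf (leader π 0 f)] ++
  (((List.finRange p).filter (fun j => j ≠ 0)).map fun j => ordBlk π j (leader π j f).1) ++
  ((List.finRange p).map fun j =>
    ordBlk π j (leader π j f).1 - ordBlk π j (coleader π j f).1)

/-- `rk f < rk g`. -/
def rkLt [NeZero n] [NeZero p] (π : Fin m → Fin p)
    (f g : MvPolynomial (DTerm m n) K) : Prop :=
  (IsConst f ∧ ¬ IsConst g) ∨
  (¬ IsConst f ∧ ¬ IsConst g ∧
    (termKey π 0 (leader π 0 f) < termKey π 0 (leader π 0 g) ∨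
     (leader π 0 f = leader π 0 g ∧ rankRest π f < rankRest π g)))

/-- `rk f = rk g`. -/
def rkEq [NeZero n] [NeZero p] (π : Fin m → Fin p)
    (f g : MvPolynomial (DTerm m n) K) : Prop :=
  (IsConst f ∧ IsConst g) ∨
  (¬ IsConst f ∧ ¬ IsConst g ∧ leader π 0 f = leader π 0 g ∧ rankRest π f = rankRest π g)

/-- `rk f ≤ rk g`. -/
def rkLe [NeZero n] [NeZero p] (π : Fin m → Fin p)
    (f g : MvPolynomial (DTerm m n) K) : Prop :=
  rkLt π f g ∨ rkEq π f g

/-- A set of `σ*`-polynomials is `E`-autoreduced if it is empty, or it contains no element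
of `K` and each of its elements is `E`-reduced with respect to all the others. -/
def EAutoreduced [NeZero n] [NeZero p] (π : Fin m → Fin p) (αK : Fin m → RingAut K)
    (hcK : ∀ i j, Commute (αK i) (αK j)) (A : Set (MvPolynomial (DTerm m n) K)) : Prop :=
  A = ∅ ∨ ((∀ f ∈ A, ¬ IsConst f) ∧
    ∀ f ∈ A, ∀ g ∈ A, f ≠ g → EReduced π αK hcK f g)

/-- `rk A < rk B` for `E`-autoreduced sets: listing the elements of `A` and `B` in order of
increasing rank, either some initial segments have elementwise equal ranks and at the next
position the element of `A` has lower rank, or `A` properly prolongs `B` rank-wise. -/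
def rkSetLt [NeZero n] [NeZero p] (π : Fin m → Fin p)
    (A B : Set (MvPolynomial (DTerm m n) K)) : Prop :=
  ∃ as bs : List (MvPolynomial (DTerm m n) K),
    as.Nodup ∧ bs.Nodup ∧ {x | x ∈ as} = A ∧ {x | x ∈ bs} = B ∧
    as.Pairwise (rkLe π) ∧ bs.Pairwise (rkLe π) ∧
    ((∃ (k : ℕ) (x y : MvPolynomial (DTerm m n) K),
        List.Forall₂ (rkEq π) (as.take k) (bs.take k) ∧
        as[k]? = some x ∧ bs[k]? = some y ∧ rkLt π x y) ∨
     (bs.length < as.length ∧ List.Forall₂ (rkEq π) (as.take bs.length) bs))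

/-- An ideal of the ring of `σ*`-polynomials stable under the action of `Γ`
(equivalently, under `σ ∪ σ⁻¹`): a `σ*`-ideal. -/
def IsSigmaStable (αK : Fin m → RingAut K) (hcK : ∀ i j, Commute (αK i) (αK j))
    (I : Ideal (MvPolynomial (DTerm m n) K)) : Prop :=
  ∀ (γ : Fin m → ℤ) f, f ∈ I → gammaAct αK hcK γ f ∈ I

/-- `[A]*`: the smallest `σ*`-ideal containing `A`. -/
noncomputable def sigmaIdealGen (αK : Fin m → RingAut K)
    (hcK : ∀ i j, Commute (αK i) (αK j)) (A : Set (MvPolynomial (DTerm m n) K)) :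
    Ideal (MvPolynomial (DTerm m n) K) :=
  sInf {I | A ⊆ I ∧ IsSigmaStable αK hcK I}

/-- An `E`-characteristic set of a `σ*`-ideal `J`: an `E`-autoreduced subset of `J` of
lowest rank among all `E`-autoreduced subsets of `J`. -/
def ECharSet [NeZero n] [NeZero p] (π : Fin m → Fin p) (αK : Fin m → RingAut K)
    (hcK : ∀ i j, Commute (αK i) (αK j)) (J : Ideal (MvPolynomial (DTerm m n) K))
    (A : Set (MvPolynomial (DTerm m n) K)) : Prop :=
  A ⊆ ↑J ∧ EAutoreduced π αK hcK A ∧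
  ∀ B : Set (MvPolynomial (DTerm m n) K), B ⊆ ↑J → EAutoreduced π αK hcK B →
    ¬ rkSetLt π B A

lemma list_le_of_forall₂ {a b : List ℕ} (h : List.Forall₂ (· ≤ ·) a b) : ¬ b < a := by
  induction h with
  | nil => simp
  | cons h1 _ ih =>
    rw [List.cons_lt_cons_iff]
    rintro (h | ⟨_, h⟩)
    · omega
    · exact ih h

lemma list_prefix_eq {a b r s : List ℤ} (h : List.Forall₂ (· ≤ ·) a b)
    (hle : ¬ a ++ r < b ++ s) : a = b := by
  induction h with
  | nil => rfl
  | cons h1 _ ih =>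
    simp only [List.cons_append, List.cons_lt_cons_iff, not_or, not_and] at hle
    have he := le_antisymm h1 (not_lt.mp hle.1)
    rw [he, ih (hle.2 he)]

lemma natAbs_add_of_similar {a b : ℤ} (h : 0 ≤ a * b) :
    (a + b).natAbs = a.natAbs + b.natAbs := by
  rcases mul_nonneg_iff.mp h with ⟨h1, h2⟩ | ⟨h1, h2⟩ <;> omega

lemma ordBlk_add (π : Fin m → Fin p) (k : Fin p) {γ δ : Fin m → ℤ} (h : similar γ δ) :
    ordBlk π k (γ + δ) = ordBlk π k γ + ordBlk π k δ := by
  unfold ordBlk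
  rw [← Finset.sum_add_distrib]
  exact Finset.sum_congr rfl fun i _ => natAbs_add_of_similar (h i)

lemma eq_zero_of_ordBlk (π : Fin m → Fin p) {γ : Fin m → ℤ} (h : ∀ k, ordBlk π k γ = 0) :
    γ = 0 := by
  funext i
  have h1 := h (π i)
  unfold ordBlk at h1
  rw [Finset.sum_eq_zero_iff] at h1
  simpa using h1 i (by simp)

lemma eq_zero_of_termKey_le (π : Fin m → Fin p) (k : Fin p) {γ : Fin m → ℤ} {u : DTerm m n}
    (h : similar γ u.1) (hle : termKey π k (shiftTerm γ u) ≤ termKey π k u) : γ = 0 := by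
  have h1 : keyTuple π k (γ + u.1) ≤ keyTuple π k u.1 := by
    unfold termKey shiftTerm at hle
    rw [Prod.Lex.toLex_le_toLex] at hle
    rcases hle with h | h
    · exact h.le
    · exact h.1.le
  have h2 := not_lt.mpr h1
  unfold keyTuple at h2
  simp only [List.append_assoc] at h2
  rw [← List.append_assoc, ← List.append_assoc [((ordBlk π k (γ + u.1) : ℕ) : ℤ)]] at h2
  have h3 := list_prefix_eq ?_ h2
  · simp only [List.singleton_append, List.cons.injEq, List.map_inj_left] at h3
    apply eq_zero_of_ordBlk π
    intro j
    have : (ordBlk π j u.1 : ℤ) = ordBlk π j (γ + u.1) := by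
      by_cases hj : j = k
      · subst hj; exact h3.1
      · exact h3.2 j (by simp [hj])
    rw [ordBlk_add π j h] at this
    omega
  · refine List.Forall₂.cons ?_ ?_
    · rw [ordBlk_add π k h]; omega
    · change List.Forall₂ _ (List.map _ _) (List.map _ _)
      rw [List.forall₂_map_left_iff, List.forall₂_map_right_iff, List.forall₂_same]
      intro j _
      rw [ordBlk_add π j h]; omega

lemma leader_mem [NeZero n] (π : Fin m → Fin p) (k : Fin p)
    {f : MvPolynomial (DTerm m n) K} (h : f.vars.Nonempty) : leader π k f ∈ f.vars := by
  unfold leader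
  rw [dif_pos h]
  exact (Finset.exists_max_image f.vars (termKey π k) h).choose_spec.1

lemma le_leader [NeZero n] (π : Fin m → Fin p) (k : Fin p)
    {f : MvPolynomial (DTerm m n) K} {u : DTerm m n} (h : u ∈ f.vars) :
    termKey π k u ≤ termKey π k (leader π k f) := by
  unfold leader
  rw [dif_pos ⟨u, h⟩]
  exact (Finset.exists_max_image f.vars (termKey π k) ⟨u, h⟩).choose_spec.2 u h

lemma gammaAct_zero (αK : Fin m → RingAut K) (hcK : ∀ i j, Commute (αK i) (αK j))
    (g : MvPolynomial (DTerm m n) K) : gammaAct αK hcK 0 g = g := by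
  have h1 : gammaPowK αK hcK 0 = 1 := by
    exact (Finset.noncommProd_eq_pow_card _ _ _ 1 (fun i _ => zpow_zero (αK i))).trans
      (one_pow _)
  have h2 : (shiftTerm 0 : DTerm m n → DTerm m n) = id := by
    funext u; simp [shiftTerm]
  unfold gammaAct
  rw [h1, h2]
  have h3 : ((1 : RingAut K) : K →+* K) = RingHom.id K := rfl
  simp [h3, MvPolynomial.map_id]

lemma degreeOf_pos_iff_mem (f : MvPolynomial (DTerm m n) K) (u : DTerm m n) :
    0 < f.degreeOf u ↔ u ∈ f.vars := by
  classical
  rw [MvPolynomial.vars_def, Multiset.mem_toFinset, MvPolynomial.degreeOf_def,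
    Multiset.count_pos]

/-- **Lower rank implies `E`-reducedness.**
If `f, g ∈ K{y₁,…,y_n}*` and `rk f < rk g`, then `f` is `E`-reduced with respect to `g`. -/
theorem eReduced_of_rkLt {K : Type*} [Field K] [CharZero K] {m n p : ℕ}
    [NeZero n] [NeZero p] (π : Fin m → Fin p) (hπ : Function.Surjective π)
    (αK : Fin m → RingAut K) (hcK : ∀ i j, Commute (αK i) (αK j))
    (f g : MvPolynomial (DTerm m n) K) (h : rkLt π f g) :
    EReduced π αK hcK f g := by
  intro γ hγ hdeg
  have hg : g.vars.Nonempty := by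
    rw [Finset.nonempty_iff_ne_empty]
    rcases h with h | h
    · exact h.2
    · exact h.2.1
  have hpos := (degreeOf_pos_iff_mem g _).mpr (leader_mem π 0 hg)
  have hmem := (degreeOf_pos_iff_mem f _).mp (lt_of_lt_of_le hpos hdeg)
  have hle := le_leader π 0 hmem
  have hs : shiftTerm (0 : Fin m → ℤ) (leader π 0 g) = leader π 0 g := by simp [shiftTerm]
  rcases h with ⟨hf, _⟩ | ⟨_, _, hlt | ⟨heq, hr⟩⟩
  · rw [IsConst] at hf
    rw [hf] at hmem
    simp at hmem
  · have h0 := eq_zero_of_termKey_le π 0 hγ (hle.trans hlt.le)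
    rw [h0, hs] at hle
    exact absurd hlt (not_lt.mpr hle)
  · have h0 := eq_zero_of_termKey_le π 0 hγ (by rw [← heq] at hle ⊢; exact hle)
    subst h0
    rw [hs] at hdeg
    rw [gammaAct_zero]
    by_contra hcon
    push Not at hcon
    obtain ⟨hc1, hc2⟩ := hcon
    have hall : ∀ k, ordBlk π k (leader π k g).1 ≤ ordBlk π k (leader π k f).1 := by
      intro k
      by_cases hk : k = 0
      · subst hk; rw [heq]
      · exact hc1 k hk
    refine list_le_of_forall₂ ?_ hr
    unfold rankRest
    refine List.rel_append (List.rel_append ?_ ?_) ?_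
    · rw [heq]; exact List.Forall₂.cons hdeg List.Forall₂.nil
    · rw [List.forall₂_map_left_iff, List.forall₂_map_right_iff, List.forall₂_same]
      intro j _
      exact hall j
    · rw [List.forall₂_map_left_iff, List.forall₂_map_right_iff, List.forall₂_same]
      intro j _
      exact tsub_le_tsub (hall j) (hc2 j)
end
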